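/- For any r ≥ 0, the pair of endpoints of any maximal path formed by elements of f_r^{-1}(red) is an element of π_r^{-1}(𝓔). That is, if a < b are such that f_r(k⁺) = red for all a ≤ k < b, and this red interval is maximal (f_r((a−1)⁺) = green or a = 1, and f_r(b⁺) = green or b = μ), then {a, b} ∈ π_r^{-1}(𝓔). -/

import Mathlib

/-!
A step of `T` that is not trivial merges a run of consecutive red blocks (maximal red paths, single
positions included) into one red block `[a, b]`. On `[a, b]` the new arrangement lists the old blocks
in reverse order, each with its internal orientation kept. The first old block is `[a, i]` because
`i⁺` is green, and the last one is `[j, b]` because `j⁻` is green. So `π' a = π j` and `π' b = π i`,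
and `{π i, π j}` is eligible by the choice of `i` and `j`. The red blocks outside `[a, b]` and the
values of `π` at their endpoints are unchanged, since `a⁻` and `b⁺` stay green. Hence the property
that every maximal red path has eligible endpoints (`TOp.Good`) is preserved by `T`
(`TOp.good_Tstep`), and it holds vacuously at the green coloring.
-/

attribute [local instance] Classical.propDecidable

inductive Col where
  | green : Col
  | red : Col
deriving DecidableEq

namespace TOp

/-- The color of position `k⁺`; positions outside `{lo⁺, …, (hi−1)⁺}` count as green. -/
def fpos (lo hi : ℕ) (f : ℕ → Col) (k : ℕ) : Col :=
  if lo ≤ k ∧ k + 1 ≤ hi then f k else Col.green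

/-- `j` is a candidate value for `j_{(π,f)}` : there is `i < j` with
`f(i⁺) = f(j⁻) = green` and `{i,j} ∈ π⁻¹(𝓔)`. -/
def jSpec (lo hi : ℕ) (E : ℕ → ℕ → Prop) (π : ℕ → ℕ) (f : ℕ → Col) (j : ℕ) : Prop :=
  lo ≤ j ∧ j ≤ hi ∧ ∃ i, lo ≤ i ∧ i < j ∧
    fpos lo hi f i = Col.green ∧ fpos lo hi f (j - 1) = Col.green ∧ E (π i) (π j)

/-- `(π,f)` is not a fixed point of `T`, i.e. `j_{(π,f)} < +∞`. -/
def hasJ (lo hi : ℕ) (E : ℕ → ℕ → Prop) (π : ℕ → ℕ) (f : ℕ → Col) : Prop :=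
  ∃ j, jSpec lo hi E π f j

/-- `j_{(π,f)}` (junk value if no candidate exists). -/
noncomputable def jVal (lo hi : ℕ) (E : ℕ → ℕ → Prop) (π : ℕ → ℕ) (f : ℕ → Col) : ℕ :=
  sInf {j | jSpec lo hi E π f j}

/-- `i_{(π,f)}`. -/
noncomputable def iVal (lo hi : ℕ) (E : ℕ → ℕ → Prop) (π : ℕ → ℕ) (f : ℕ → Col) : ℕ :=
  sSup {i | lo ≤ i ∧ i < jVal lo hi E π f ∧ fpos lo hi f i = Col.green ∧
    E (π i) (π (jVal lo hi E π f))}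

/-- `a_{(π,f)}(k)`. -/
noncomputable def aVal (lo hi : ℕ) (f : ℕ → Col) (k : ℕ) : ℕ :=
  if fpos lo hi f (k - 1) = Col.green then k
  else sInf {i' | i' ≤ k ∧ ∀ i'', i' ≤ i'' → i'' < k → fpos lo hi f i'' = Col.red}

/-- `b_{(π,f)}(k)`. -/
noncomputable def bVal (lo hi : ℕ) (f : ℕ → Col) (k : ℕ) : ℕ :=
  if fpos lo hi f k = Col.green then k
  else sSup {j' | k ≤ j' ∧ ∀ j'', k < j'' → j'' ≤ j' → fpos lo hi f (j'' - 1) = Col.red}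

/-- The operator `T` on states `(π, f)`. -/
noncomputable def Tstep (lo hi : ℕ) (E : ℕ → ℕ → Prop)
    (s : (ℕ → ℕ) × (ℕ → Col)) : (ℕ → ℕ) × (ℕ → Col) :=
  if hasJ lo hi E s.1 s.2 then
    let a := aVal lo hi s.2 (iVal lo hi E s.1 s.2)
    let b := bVal lo hi s.2 (jVal lo hi E s.1 s.2)
    (fun k => if a ≤ k ∧ k ≤ b then
        s.1 (aVal lo hi s.2 (a + b - k) + bVal lo hi s.2 (a + b - k) - (a + b - k))
      else s.1 k,
     fun k => if a ≤ k ∧ k < b then Col.red else s.2 k)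
  else s

/-- `(π_r, f_r) = T^r(π₀, 𝐠𝐫𝐞𝐞𝐧)`. -/
noncomputable def TIter (lo hi : ℕ) (E : ℕ → ℕ → Prop) (π₀ : ℕ → ℕ) (r : ℕ) :
    (ℕ → ℕ) × (ℕ → Col) :=
  (Tstep lo hi E)^[r] (π₀, fun _ => Col.green)

/-- `j_{(π,f)}` as an extended natural number (`⊤` encodes `+∞`). -/
noncomputable def jE (lo hi : ℕ) (E : ℕ → ℕ → Prop) (π : ℕ → ℕ) (f : ℕ → Col) : ℕ∞ :=
  if hasJ lo hi E π f then (jVal lo hi E π f : ℕ∞) else ⊤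

end TOp

namespace TOp

/-- Every maximal red path of the state `s` has eligible endpoints. As `fpos` is green outside the
genuine positions, the boundary cases `a = 1` and `b = μ` of maximality need no separate mention. -/
def Good (μ : ℕ) (E : ℕ → ℕ → Prop) (s : (ℕ → ℕ) × (ℕ → Col)) : Prop :=
  ∀ a b, 1 ≤ a → a < b → b ≤ μ → (∀ k, a ≤ k → k < b → fpos 1 μ s.2 k = Col.red) →
    fpos 1 μ s.2 (a - 1) = Col.green → fpos 1 μ s.2 b = Col.green → E (s.1 a) (s.1 b)

lemma fpos_zero (μ : ℕ) (f : ℕ → Col) : fpos 1 μ f 0 = Col.green := by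
  simp [fpos]

lemma fpos_last (μ : ℕ) (f : ℕ → Col) : fpos 1 μ f μ = Col.green := by
  simp [fpos]

lemma col_red_of_ne_green {c : Col} (h : c ≠ Col.green) : c = Col.red := by
  cases c <;> simp_all

/-- `aVal` is the left end of the red block containing `k`. -/
lemma aVal_eq {μ : ℕ} {f : ℕ → Col} {k m : ℕ} (hm : 1 ≤ m) (hmk : m ≤ k)
    (hred : ∀ i, m ≤ i → i < k → fpos 1 μ f i = Col.red)
    (hg : fpos 1 μ f (m - 1) = Col.green) : aVal 1 μ f k = m := by
  unfold aVal
  split_ifs with h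
  · by_contra hne
    have := hred (k - 1) (by omega) (by omega)
    rw [h] at this
    cases this
  · apply le_antisymm
    · exact Nat.sInf_le ⟨hmk, hred⟩
    · refine le_csInf ⟨m, hmk, hred⟩ ?_
      rintro n ⟨_, hn⟩
      by_contra hlt
      have := hn (m - 1) (by omega) (by omega)
      rw [hg] at this
      cases this

/-- `bVal` is the right end of the red block containing `k`. -/
lemma bVal_eq {μ : ℕ} {f : ℕ → Col} {k m : ℕ} (hkm : k ≤ m)
    (hred : ∀ i, k ≤ i → i < m → fpos 1 μ f i = Col.red)
    (hg : fpos 1 μ f m = Col.green) : bVal 1 μ f k = m := by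
  unfold bVal
  split_ifs with h
  · by_contra hne
    have := hred k le_rfl (by omega)
    rw [h] at this
    cases this
  · have hmem : m ∈ {j' | k ≤ j' ∧ ∀ j'', k < j'' → j'' ≤ j' →
        fpos 1 μ f (j'' - 1) = Col.red} :=
      ⟨hkm, fun j h1 h2 => hred _ (by omega) (by omega)⟩
    have hub : ∀ n ∈ {j' | k ≤ j' ∧ ∀ j'', k < j'' → j'' ≤ j' →
        fpos 1 μ f (j'' - 1) = Col.red}, n ≤ m := by
      rintro n ⟨_, hn⟩
      by_contra hlt
      have := hn (m + 1) (by omega) (by omega)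
      rw [Nat.add_sub_cancel, hg] at this
      cases this
    exact le_antisymm (csSup_le ⟨m, hmem⟩ hub) (le_csSup ⟨m, hub⟩ hmem)

lemma exists_left_end (μ : ℕ) (f : ℕ → Col) (k : ℕ) (hk : 1 ≤ k) :
    ∃ m, 1 ≤ m ∧ m ≤ k ∧ (∀ i, m ≤ i → i < k → fpos 1 μ f i = Col.red) ∧
      fpos 1 μ f (m - 1) = Col.green := by
  induction k, hk using Nat.le_induction with
  | base => exact ⟨1, le_rfl, le_rfl, fun i h1 h2 => by omega, fpos_zero μ f⟩
  | succ k hk ih =>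
    by_cases h : fpos 1 μ f k = Col.green
    · exact ⟨k + 1, by omega, le_rfl, fun i h1 h2 => by omega, h⟩
    · obtain ⟨m, h1, h2, h3, h4⟩ := ih
      refine ⟨m, h1, by omega, fun i hi1 hi2 => ?_, h4⟩
      rcases Nat.lt_succ_iff_lt_or_eq.mp hi2 with hi | rfl
      · exact h3 i hi1 hi
      · exact col_red_of_ne_green h

lemma exists_right_end (μ : ℕ) (f : ℕ → Col) (k : ℕ) (hk : k ≤ μ) :
    ∃ m, k ≤ m ∧ m ≤ μ ∧ (∀ i, k ≤ i → i < m → fpos 1 μ f i = Col.red) ∧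
      fpos 1 μ f m = Col.green := by
  induction hk using Nat.decreasingInduction with
  | self => exact ⟨μ, le_rfl, le_rfl, fun i h1 h2 => by omega, fpos_last μ f⟩
  | of_succ k hk ih =>
    by_cases h : fpos 1 μ f k = Col.green
    · exact ⟨k, le_rfl, by omega, fun i h1 h2 => by omega, h⟩
    · obtain ⟨m, h1, h2, h3, h4⟩ := ih
      refine ⟨m, by omega, h2, fun i hi1 hi2 => ?_, h4⟩
      rcases Nat.eq_or_lt_of_le hi1 with rfl | hi
      · exact col_red_of_ne_green h
      · exact h3 i hi hi2

/-- The defining properties of `jVal` and `iVal` at a state that is not a fixed point. -/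
lemma ij_spec {μ : ℕ} {E : ℕ → ℕ → Prop} {π : ℕ → ℕ} {f : ℕ → Col} (h : hasJ 1 μ E π f) :
    jVal 1 μ E π f ≤ μ ∧ fpos 1 μ f (jVal 1 μ E π f - 1) = Col.green ∧
      1 ≤ iVal 1 μ E π f ∧ iVal 1 μ E π f < jVal 1 μ E π f ∧
      fpos 1 μ f (iVal 1 μ E π f) = Col.green ∧
      E (π (iVal 1 μ E π f)) (π (jVal 1 μ E π f)) := by
  have hj : jSpec 1 μ E π f (jVal 1 μ E π f) := Nat.sInf_mem h
  obtain ⟨_, h2, i, hi1, hi2, hi3, hi4, hi5⟩ := hj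
  have hi : iVal 1 μ E π f ∈ {i | 1 ≤ i ∧ i < jVal 1 μ E π f ∧ fpos 1 μ f i = Col.green ∧
      E (π i) (π (jVal 1 μ E π f))} :=
    Nat.sSup_mem ⟨i, hi1, hi2, hi3, hi5⟩ ⟨jVal 1 μ E π f, fun n hn => hn.2.1.le⟩
  exact ⟨h2, hi4, hi⟩

lemma good_Tstep {μ : ℕ} {E : ℕ → ℕ → Prop} (hEsymm : ∀ x y, E x y → E y x)
    {s : (ℕ → ℕ) × (ℕ → Col)} (hs : Good μ E s) : Good μ E (Tstep 1 μ E s) := by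
  obtain ⟨π, f⟩ := s
  by_cases h : hasJ 1 μ E π f
  swap
  · rwa [Tstep, if_neg h]
  obtain ⟨hjμ, hjg, hi1, hij, hig, hE⟩ := ij_spec h
  unfold Tstep
  simp only [if_pos h]
  generalize iVal 1 μ E π f = i at *
  generalize jVal 1 μ E π f = j at *
  obtain ⟨a, ha1, hai, har, hag⟩ := exists_left_end μ f i hi1
  obtain ⟨b, hjb, hbμ, hbr, hbg⟩ := exists_right_end μ f j hjμ
  rw [aVal_eq ha1 hai har hag, bVal_eq hjb hbr hbg]
  have hcol : ∀ k, fpos 1 μ (fun k => if a ≤ k ∧ k < b then Col.red else f k) k =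
      if a ≤ k ∧ k < b then Col.red else fpos 1 μ f k := by
    intro k
    unfold fpos
    dsimp only
    split_ifs <;> first | rfl | omega
  intro c d hc hcd hd hr hl hg
  simp only [hcol] at hr hl hg
  have hl' : ¬ (a ≤ c - 1 ∧ c - 1 < b) := fun hh => by simp [hh] at hl
  have hg' : ¬ (a ≤ d ∧ d < b) := fun hh => by simp [hh] at hg
  rw [if_neg hl'] at hl
  rw [if_neg hg'] at hg
  by_cases hdisj : d < a ∨ b < c
  · -- The path lies outside `[a, b]`, so it was already a maximal red path with the same endpoints.
    have hc' : ¬ (a ≤ c ∧ c ≤ b) := by omega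
    have hd' : ¬ (a ≤ d ∧ d ≤ b) := by omega
    simp only [if_neg hc', if_neg hd']
    refine hs c d hc hcd hd (fun k h1 h2 => ?_) hl hg
    have := hr k h1 h2
    rwa [if_neg (by omega)] at this
  · -- The path meets `[a, b]`, whose outer neighbours are green, so it equals `[a, b]`.
    have hca : c = a := by
      by_contra hne
      have := hr (a - 1) (by omega) (by omega)
      rw [if_neg (by omega), hag] at this
      cases this
    have hdb : d = b := by
      by_contra hne
      have := hr b (by omega) (by omega)
      rw [if_neg (by omega), hbg] at this
      cases this
    subst hca hdb
    have e1 : c + d - c = d := by omega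
    have e2 : c + d - d = c := by omega
    -- The red block of `d` is `[j, d]`, and the red block of `c` is `[c, i]`.
    have e3 : aVal 1 μ f d = j := aVal_eq (by omega) hjb hbr hjg
    have e4 : bVal 1 μ f d = d := bVal_eq le_rfl (fun k h1 h2 => by omega) hbg
    have e5 : aVal 1 μ f c = c := aVal_eq hc le_rfl (fun k h1 h2 => by omega) hag
    have e6 : bVal 1 μ f c = i := bVal_eq hai har hig
    have e7 : j + d - d = j := by omega
    have e8 : c + i - c = i := by omega
    simp only [e1, e2, e3, e4, e5, e6, e7, e8, le_refl, hcd.le, and_self, if_true]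
    exact hEsymm _ _ hE

lemma good_TIter {μ : ℕ} {E : ℕ → ℕ → Prop} (hEsymm : ∀ x y, E x y → E y x)
    (π₀ : ℕ → ℕ) (r : ℕ) : Good μ E (TIter 1 μ E π₀ r) := by
  induction r with
  | zero =>
    intro a b _ hab _ hr
    have := hr a le_rfl hab
    simp [TIter, fpos] at this
  | succ r ih =>
    have : TIter 1 μ E π₀ (r + 1) = Tstep 1 μ E (TIter 1 μ E π₀ r) :=
      Function.iterate_succ_apply' _ _ _
    rw [this]
    exact good_Tstep hEsymm ih

end TOp

open TOp in
/-- For any `r ≥ 0`, the pair of endpoints of any maximal path formed by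
elements of `f_r⁻¹(red)` is an element of `π_r⁻¹(𝓔)`. -/
theorem stmt5 (μ : ℕ) (hμ : 2 ≤ μ) (E : ℕ → ℕ → Prop)
    (hEsymm : ∀ x y, E x y → E y x)
    (hEirr : ∀ x, ¬ E x x)
    (hEmem : ∀ x y, E x y → 1 ≤ x ∧ x ≤ μ ∧ 1 ≤ y ∧ y ≤ μ)
    (hEclique : ∀ x y z, E x y → E y z → x ≠ z → E x z)
    (π₀ : ℕ → ℕ) (hπ₀ : Set.BijOn π₀ (Set.Icc 1 μ) (Set.Icc 1 μ))
    (r a b : ℕ) (ha : 1 ≤ a) (hab : a < b) (hb : b ≤ μ)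
    (hred : ∀ k, a ≤ k → k < b → fpos 1 μ (TIter 1 μ E π₀ r).2 k = Col.red)
    (hleft : fpos 1 μ (TIter 1 μ E π₀ r).2 (a - 1) = Col.green ∨ a = 1)
    (hright : fpos 1 μ (TIter 1 μ E π₀ r).2 b = Col.green ∨ b = μ) :
    E ((TIter 1 μ E π₀ r).1 a) ((TIter 1 μ E π₀ r).1 b) := by
  refine good_TIter hEsymm π₀ r a b ha hab hb hred ?_ ?_
  · rcases hleft with h | rfl
    · exact h
    · exact fpos_zero μ _
  · rcases hright with h | rfl
    · exact h
    · exact fpos_last _ _
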